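/- Let B ↪ C be a module-finite extension of Noetherian domains with B a unique factorization domain, C a normal domain, and Frac(B) → Frac(C) separable. Define S_{C/B} to be the set of height-one primes of B that are associated primes of the B-module Ω_{C/B}. Then S_{C/B} is a finite set, and for any height-one prime p of B with p ∉ S_{C/B}, the quotient ring C/pC is reduced. -/

import Mathlib

/-- A height-one prime of a domain: a nonzero prime ideal all of whose strictly smaller primes
are zero. -/
def IsHeightOnePrime {B : Type*} [CommRing B] (p : Ideal B) : Prop :=
  p.IsPrime ∧ p ≠ ⊥ ∧ ∀ q : Ideal B, q.IsPrime → q < p → q = ⊥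

/-!
Since `L / K` is separable, `Ω[C⁄B]` is a torsion module. A height-one prime `p` not associated to
it therefore lies outside its support, so `C` is unramified over `B` at `p` and `p` generates a
radical ideal in the localization `C_p`. When `p = (π)`, nothing is lost on contracting back to
`C`: if `s ∉ p` and `π` divides `s • c`, then `x = c / π` is such that `π • x` and `s • x` are both
integral over `B`, which forces the coefficients of the minimal polynomial of `x` into `B`; hence
`x ∈ C`, as `C` is integrally closed.
-/

open scoped nonZeroDivisors

section Ramification

variable {B C : Type*} [CommRing B] [CommRing C] [Algebra B C]

theorem formallyUnramified_isLocalization_iff_forall_exists_smul_eq_zero (M : Submonoid B)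
    (Bₘ Cₘ : Type*) [CommRing Bₘ] [CommRing Cₘ] [Algebra B Bₘ] [Algebra C Cₘ] [Algebra Bₘ Cₘ]
    [Algebra B Cₘ] [IsScalarTower B C Cₘ] [IsScalarTower B Bₘ Cₘ] [IsLocalization M Bₘ]
    [IsLocalization (Algebra.algebraMapSubmonoid C M) Cₘ] :
    Algebra.FormallyUnramified Bₘ Cₘ ↔ ∀ ω : Ω[C⁄B], ∃ m ∈ M, m • ω = 0 := by
  rw [Algebra.formallyUnramified_iff]
  exact IsLocalizedModule.subsingleton_iff M
    ((KaehlerDifferential.map B Bₘ C Cₘ).restrictScalars B)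

theorem isTorsion_kaehlerDifferential_of_isSeparable [IsDomain B] [IsDomain C]
    (K L : Type*) [Field K] [Field L] [Algebra B K] [IsFractionRing B K] [Algebra C L]
    [IsFractionRing C L] [Algebra K L] [Algebra B L] [IsScalarTower B K L] [IsScalarTower B C L]
    [Algebra.IsSeparable K L] :
    Module.IsTorsion B (Ω[C⁄B]) := by
  have : FaithfulSMul B C := .of_field_isFractionRing B C K L
  have : Algebra.IsAlgebraic B L :=
    (IsFractionRing.comap_isAlgebraic_iff (K := K)).mpr inferInstance
  have : Algebra.IsAlgebraic B C := .tower_bot_of_injective (IsFractionRing.injective C L)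
  have : Algebra.FormallyUnramified K L := .of_isSeparable K L
  intro ω
  obtain ⟨b, hb, hbω⟩ :=
    (formallyUnramified_isLocalization_iff_forall_exists_smul_eq_zero B⁰ K L).mp this ω
  exact ⟨⟨b, hb⟩, hbω⟩

theorem isRadical_map_of_not_annihilator_kaehlerDifferential_le [Algebra.EssFiniteType B C]
    {p : Ideal B} [p.IsPrime] (hann : ¬ Module.annihilator B (Ω[C⁄B]) ≤ p)
    (hsat : ∀ s ∉ p, ∀ c : C,
      s • c ∈ p.map (algebraMap B C) → c ∈ p.map (algebraMap B C)) :
    (p.map (algebraMap B C)).IsRadical := by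
  let Bₚ := Localization.AtPrime p
  let Cₚ := Localization (Algebra.algebraMapSubmonoid C p.primeCompl)
  obtain ⟨t, ht, htp⟩ := SetLike.not_le_iff_exists.mp hann
  have : Algebra.FormallyUnramified Bₚ Cₚ :=
    (formallyUnramified_isLocalization_iff_forall_exists_smul_eq_zero p.primeCompl Bₚ Cₚ).mpr
      fun ω ↦ ⟨t, htp, Module.mem_annihilator.mp ht ω⟩
  have : Algebra.EssFiniteType C Cₚ :=
    .of_isLocalization Cₚ (Algebra.algebraMapSubmonoid C p.primeCompl)
  have : Algebra.EssFiniteType B Cₚ := .comp B C Cₚ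
  have : Algebra.EssFiniteType Bₚ Cₚ := .of_comp B Bₚ Cₚ
  have hrad := Algebra.FormallyUnramified.isRadical_map_isMaximal (A := Bₚ) Cₚ
    (IsLocalRing.maximalIdeal Bₚ)
  rw [← Localization.AtPrime.map_eq_maximalIdeal, Ideal.map_map,
    ← IsScalarTower.algebraMap_eq, IsScalarTower.algebraMap_eq B C Cₚ, ← Ideal.map_map] at hrad
  have hcomap : ((p.map (algebraMap B C)).map (algebraMap C Cₚ)).comap (algebraMap C Cₚ) =
      p.map (algebraMap B C) := by
    refine le_antisymm (fun c hc ↦ ?_) Ideal.le_comap_map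
    obtain ⟨_, ⟨s, hs, rfl⟩, hsc⟩ := (IsLocalization.algebraMap_mem_map_algebraMap_iff
      (Algebra.algebraMapSubmonoid C p.primeCompl) Cₚ _ c).mp hc
    exact hsat s hs c (by rwa [Algebra.smul_def])
  exact hcomap ▸ hrad.comap _

end Ramification

theorem IsHeightOnePrime.mem_associatedPrimes {B M : Type*} [CommRing B] [IsNoetherianRing B]
    [AddCommGroup M] [Module B M] [Module.Finite B M] {p : Ideal B} (hp : IsHeightOnePrime p)
    (hM : Module.IsTorsion B M) (hann : Module.annihilator B M ≤ p) :
    p ∈ associatedPrimes B M := by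
  obtain ⟨hprime, hbot, hmin⟩ := hp
  obtain ⟨b, hbM, hb⟩ := Submodule.annihilator_top_inter_nonZeroDivisors hM
  rw [Submodule.annihilator_top] at hbM
  have : Nontrivial B := (Submodule.nontrivial_iff B).mp ⟨p, ⊥, hbot⟩
  refine Module.associatedPrimes.minimalPrimes_annihilator_subset_associatedPrimes B M
    ⟨⟨hprime, hann⟩, fun q ⟨hq, hqann⟩ hqp ↦ ?_⟩
  by_contra hpq
  have hq : q = ⊥ := hmin q hq (lt_of_le_not_ge hqp hpq)
  exact nonZeroDivisors.ne_zero hb (by simpa [hq] using hqann hbM)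

theorem IsHeightOnePrime.isPrincipal {B : Type*} [CommRing B]
    [UniqueFactorizationMonoid B] {p : Ideal B} (hp : IsHeightOnePrime p) : p.IsPrincipal := by
  obtain ⟨hprime, hbot, hmin⟩ := hp
  obtain ⟨π, hπp, hπ⟩ := hprime.exists_mem_prime_of_ne_bot hbot
  have hle : Ideal.span {π} ≤ p := (Ideal.span_singleton_le_iff_mem p).mpr hπp
  refine ⟨π, (hle.eq_of_not_lt fun hlt ↦ hπ.ne_zero ?_).symm⟩
  exact Ideal.span_singleton_eq_bot.mp
    (hmin _ ((Ideal.span_singleton_prime hπ.ne_zero).mpr hπ) hlt)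

section Integrality

variable {B K L : Type*} [CommRing B] [Field K] [Algebra B K] [IsFractionRing B K]
  [Field L] [Algebra K L] [Algebra B L] [IsScalarTower B K L]

variable (K) in
theorem isIntegral_fractionRing_of_isIntegral_smul {r : B} (hr : r ≠ 0) {x : L}
    (hx : IsIntegral B (r • x)) : IsIntegral K x := by
  have hrK : algebraMap B K r ≠ 0 :=
    (map_ne_zero_iff _ (IsFractionRing.injective B K)).mpr hr
  have hrx := (hx.tower_top (A := K)).smul (algebraMap B K r)⁻¹
  rwa [← algebraMap_smul K r x, inv_smul_smul₀ hrK] at hrx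

variable [IsDomain B]

theorem mem_range_algebraMap_of_mul_pow_mem_range {π s : B} (hπ : Prime π) (hs : ¬ π ∣ s)
    {a : K} {n : ℕ} (haπ : a * algebraMap B K π ^ n ∈ Set.range (algebraMap B K))
    (has : a * algebraMap B K s ^ n ∈ Set.range (algebraMap B K)) :
    a ∈ Set.range (algebraMap B K) := by
  obtain ⟨b, hb⟩ := haπ
  obtain ⟨c, hc⟩ := has
  have hcross : b * s ^ n = π ^ n * c := by
    apply IsFractionRing.injective B K
    simp only [map_mul, map_pow, hb, hc]
    ring
  obtain ⟨e, rfl⟩ : π ^ n ∣ b :=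
    hπ.pow_dvd_of_dvd_mul_right n (fun h ↦ hs (hπ.dvd_of_dvd_pow h)) ⟨c, hcross⟩
  have hπK : algebraMap B K π ^ n ≠ 0 :=
    pow_ne_zero n ((map_ne_zero_iff _ (IsFractionRing.injective B K)).mpr hπ.ne_zero)
  refine ⟨e, mul_right_cancel₀ hπK ?_⟩
  rw [← hb, map_mul, map_pow, mul_comm]

variable [IsIntegrallyClosed B]

theorem minpoly_coeff_mul_pow_mem_range_of_isIntegral_smul {r : B} (hr : r ≠ 0) {x : L}
    (hx : IsIntegral B (r • x)) (i : ℕ) :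
    (minpoly K x).coeff i * algebraMap B K r ^ ((minpoly K x).natDegree - i) ∈
      Set.range (algebraMap B K) := by
  have hrK : algebraMap B K r ≠ 0 :=
    (map_ne_zero_iff _ (IsFractionRing.injective B K)).mpr hr
  refine ⟨(minpoly B (r • x)).coeff i, ?_⟩
  rw [← Polynomial.coeff_map, ← minpoly.isIntegrallyClosed_eq_field_fractions' K hx,
    ← algebraMap_smul K r x,
    IsIntegrallyClosed.minpoly_smul hrK (isIntegral_fractionRing_of_isIntegral_smul K hr hx),
    Polynomial.coeff_scaleRoots]

variable (K) in
include K in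
theorem isIntegral_of_isIntegral_smul_of_not_dvd {π s : B} (hπ : Prime π) (hs : ¬ π ∣ s) {x : L}
    (hπx : IsIntegral B (π • x)) (hsx : IsIntegral B (s • x)) : IsIntegral B x := by
  have hs₀ : s ≠ 0 := by
    rintro rfl
    exact hs (dvd_zero π)
  have hxK : IsIntegral K x := isIntegral_fractionRing_of_isIntegral_smul K hs₀ hsx
  have hlifts : minpoly K x ∈ Polynomial.lifts (algebraMap B K) := by
    refine (Polynomial.lifts_iff_coeff_lifts _).mpr fun i ↦ ?_
    exact mem_range_algebraMap_of_mul_pow_mem_range hπ hs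
      (minpoly_coeff_mul_pow_mem_range_of_isIntegral_smul hπ.ne_zero hπx i)
      (minpoly_coeff_mul_pow_mem_range_of_isIntegral_smul hs₀ hsx i)
  obtain ⟨f, hf, -, hmonic⟩ :=
    Polynomial.lifts_and_natDegree_eq_and_monic hlifts (minpoly.monic hxK)
  refine ⟨f, hmonic, ?_⟩
  rw [← Polynomial.aeval_def, ← Polynomial.aeval_map_algebraMap K, hf, minpoly.aeval]

end Integrality

theorem algebraMap_dvd_of_dvd_smul {B C : Type*} [CommRing B] [IsDomain B] [IsIntegrallyClosed B]
    [CommRing C] [IsDomain C] [IsIntegrallyClosed C] [Algebra B C] [FaithfulSMul B C]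
    [Algebra.IsIntegral B C] {π s : B} (hπ : Prime π) (hs : ¬ π ∣ s) {c : C}
    (h : algebraMap B C π ∣ s • c) : algebraMap B C π ∣ c := by
  let K := FractionRing B
  let L := FractionRing C
  let : Algebra K L := FractionRing.liftAlgebra B L
  obtain ⟨d, hd⟩ := h
  have hπL : algebraMap B L π ≠ 0 :=
    (map_ne_zero_iff _ (FaithfulSMul.algebraMap_injective B L)).mpr hπ.ne_zero
  obtain ⟨x, hπx⟩ : ∃ x : L, algebraMap B L π * x = algebraMap C L c :=
    ⟨_, mul_div_cancel₀ _ hπL⟩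
  have hsx : algebraMap B L s * x = algebraMap C L d := by
    apply mul_left_cancel₀ hπL
    rw [mul_left_comm, hπx, IsScalarTower.algebraMap_apply B C L, ← map_mul,
      ← Algebra.smul_def, hd, map_mul, ← IsScalarTower.algebraMap_apply]
  have hx : IsIntegral B x := by
    apply isIntegral_of_isIntegral_smul_of_not_dvd K hπ hs <;> rw [Algebra.smul_def]
    · exact hπx ▸ (Algebra.IsIntegral.isIntegral c).algebraMap
    · exact hsx ▸ (Algebra.IsIntegral.isIntegral d).algebraMap
  obtain ⟨e, rfl⟩ := IsIntegrallyClosed.isIntegral_iff.mp (hx.tower_top (A := C))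
  refine ⟨e, IsFractionRing.injective C L ?_⟩
  rw [map_mul, ← hπx, ← IsScalarTower.algebraMap_apply]

theorem stmt_3_general {B C : Type*} [CommRing B] [IsDomain B] [IsNoetherianRing B]
    [IsIntegrallyClosed B] [CommRing C] [IsDomain C] [IsIntegrallyClosed C] [Algebra B C]
    [Module.Finite B C] (K L : Type*) [Field K] [Field L] [Algebra B K] [IsFractionRing B K]
    [Algebra C L] [IsFractionRing C L] [Algebra K L] [Algebra B L] [IsScalarTower B K L]
    [IsScalarTower B C L] [Algebra.IsSeparable K L] :
    (associatedPrimes B (Ω[C⁄B])).Finite ∧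
      ∀ p : Ideal B, IsHeightOnePrime p → p.IsPrincipal → p ∉ associatedPrimes B (Ω[C⁄B]) →
        IsReduced (C ⧸ p.map (algebraMap B C)) := by
  have : FaithfulSMul B C := .of_field_isFractionRing B C K L
  have : Module.Finite B (Ω[C⁄B]) := .trans C _
  refine ⟨associatedPrimes.finite B _, ?_⟩
  rintro _ hp ⟨π, rfl⟩ hpass
  have hprime := hp.1
  have hπ : Prime π := (Ideal.span_singleton_prime (by simpa using hp.2.1)).mp hprime
  have hann : ¬ Module.annihilator B (Ω[C⁄B]) ≤ Ideal.span {π} :=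
    mt (hp.mem_associatedPrimes (isTorsion_kaehlerDifferential_of_isSeparable K L)) hpass
  refine (Ideal.isRadical_iff_quotient_reduced _).mp
    (isRadical_map_of_not_annihilator_kaehlerDifferential_le hann fun s hs c hsc ↦ ?_)
  rw [Ideal.map_span, Set.image_singleton, Ideal.mem_span_singleton] at hsc ⊢
  exact algebraMap_dvd_of_dvd_smul hπ (mt Ideal.mem_span_singleton.mpr hs) hsc

/-- Local Bertini theorem. Let `B ↪ C` be a module-finite extension of
Noetherian domains with `B` a UFD, `C` a normal domain and `Frac(B) → Frac(C)` separable.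
Let `S_{C/B}` be the set of height-one primes of `B` that are associated primes of the
`B`-module `Ω_{C/B}`. Then `S_{C/B}` is finite, and for any height-one prime `p ∉ S_{C/B}`,
the ring `C/pC` is reduced. -/
theorem stmt_3 {B C : Type*} [CommRing B] [IsDomain B] [IsNoetherianRing B]
    [UniqueFactorizationMonoid B]
    [CommRing C] [IsDomain C] [IsNoetherianRing C] [IsIntegrallyClosed C]
    [Algebra B C] (hinj : Function.Injective (algebraMap B C)) [Module.Finite B C]
    (K L : Type*) [Field K] [Field L]
    [Algebra B K] [IsFractionRing B K]
    [Algebra C L] [IsFractionRing C L]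
    [Algebra K L] [Algebra B L] [IsScalarTower B K L] [IsScalarTower B C L]
    [Algebra.IsSeparable K L]
    (S : Set (Ideal B))
    (hS : S = {p : Ideal B | IsHeightOnePrime p ∧ p ∈ associatedPrimes B (Ω[C⁄B])}) :
    S.Finite ∧
      ∀ p : Ideal B, IsHeightOnePrime p → p ∉ S →
        IsReduced (C ⧸ (Ideal.map (algebraMap B C) p : Ideal C)) := by
  obtain ⟨hfin, hred⟩ := stmt_3_general (B := B) (C := C) K L
  subst hS
  exact ⟨hfin.subset fun p hp ↦ hp.2,
    fun p hp hpS ↦ hred p hp hp.isPrincipal fun hpass ↦ hpS ⟨hp, hpass⟩⟩
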